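/- For all u, v ∈ 𝒰_Ω one has ‖u_x‖₁ · ‖v_y‖₁ ≤ 4 ‖u_y‖₁ · ‖v_x‖₁. In particular, the ratio between the supremum and the infimum of ‖u_x‖₁/‖u_y‖₁ over nonzero u ∈ 𝒰_Ω is at most 4. -/

import Mathlib

open Set MeasureTheory
open scoped ENNReal

/-- Partial derivative of `u` in the `x` direction (junk value where `u` is not
differentiable). -/
noncomputable def ux (u : ℝ × ℝ → ℝ) (z : ℝ × ℝ) : ℝ := fderiv ℝ u z (1, 0)

/-- Partial derivative of `u` in the `y` direction. -/
noncomputable def uy (u : ℝ × ℝ → ℝ) (z : ℝ × ℝ) : ℝ := fderiv ℝ u z (0, 1)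

/-- Directional derivative of `u` in the direction `h`. -/
noncomputable def uh (h : ℝ × ℝ) (u : ℝ × ℝ → ℝ) (z : ℝ × ℝ) : ℝ := fderiv ℝ u z h

/-- The class `𝒰_Ω`: continuous concave functions on `Ω` vanishing on the boundary,
with uniformly bounded gradient over all interior points where it exists. -/
def MemU (Ω : Set (ℝ × ℝ)) (u : ℝ × ℝ → ℝ) : Prop :=
  ContinuousOn u Ω ∧ ConcaveOn ℝ Ω u ∧ (∀ z ∈ frontier Ω, u z = 0) ∧
    ∃ C : ℝ, ∀ z ∈ interior Ω, ∀ g : (ℝ × ℝ) →L[ℝ] ℝ, HasFDerivAt u g z → ‖g‖ ≤ C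

/-- The `L¹` norm of `f` over `Ω`. -/
noncomputable def L1N (Ω : Set (ℝ × ℝ)) (f : ℝ × ℝ → ℝ) : ℝ := ∫ z in Ω, |f z|

/-- The `L^p` norm of `f` over `Ω`, `p ∈ [1, ∞)`. -/
noncomputable def LpN (Ω : Set (ℝ × ℝ)) (p : ℝ) (f : ℝ × ℝ → ℝ) : ℝ :=
  (∫ z in Ω, |f z| ^ p) ^ (1 / p)

/-- The `L^∞` norm (essential supremum) of `f` over `Ω`. -/
noncomputable def LinfN (Ω : Set (ℝ × ℝ)) (f : ℝ × ℝ → ℝ) : ℝ≥0∞ :=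
  essSup (fun z => ENNReal.ofReal |f z|) (volume.restrict Ω)

/-- The width of `Ω` parallel to the (Euclidean unit) vector `h`: the distance between the
two lines of support of `Ω` parallel to `h`, i.e. the oscillation over `Ω` of the linear
functional given by the unit normal `(-h.2, h.1)` to `h`. -/
noncomputable def widthPar (Ω : Set (ℝ × ℝ)) (h : ℝ × ℝ) : ℝ :=
  sSup ((fun z : ℝ × ℝ => -h.2 * z.1 + h.1 * z.2) '' Ω) -
    sInf ((fun z : ℝ × ℝ => -h.2 * z.1 + h.1 * z.2) '' Ω)


/-- Integrating the absolute value of the derivative of a monotone function with right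
derivatives everywhere gives its increment. -/
lemma MonotoneOn.integral_abs_deriv_of_hasDerivWithinAt_Ioi {a b : ℝ} (hab : a ≤ b)
    {f r g : ℝ → ℝ} (hf : MonotoneOn f (Icc a b)) (hc : ContinuousOn f (Icc a b))
    (hr : ∀ x ∈ Ioo a b, HasDerivWithinAt f (r x) (Ioi x) x)
    (hg : ∀ᵐ x, x ∈ Ioo a b → HasDerivAt f (g x) x) :
    IntervalIntegrable (fun x => |g x|) volume a b ∧ ∫ x in a..b, |g x| = f b - f a := by
  have hr0 : ∀ x ∈ Ioo a b, 0 ≤ r x := by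
    intro x hx
    have hacc : AccPt x (Filter.principal (Ioo x b)) := by
      rw [accPt_principal_iff_nhdsWithin]
      have : Ioo x b \ {x} = Ioo x b := by
        ext y; simp only [mem_sdiff, mem_Ioo, mem_singleton_iff]
        exact ⟨fun h => h.1, fun h => ⟨h, h.1.ne'⟩⟩
      rw [this]
      exact left_nhdsWithin_Ioo_neBot hx.2
    exact ((hr x hx).mono Ioo_subset_Ioi_self).nonneg_of_monotoneOn hacc
      (hf.mono (Ioo_subset_Icc_self.trans (Icc_subset_Icc_left hx.1.le)))
  have hint : IntervalIntegrable r volume a b :=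
    (intervalIntegrable_iff_integrableOn_Ioc_of_le hab).2
      (intervalIntegral.integrableOn_deriv_right_of_nonneg hc hr hr0)
  have hI := intervalIntegral.integral_eq_sub_of_hasDeriv_right_of_le hab hc hr hint
  have hae : ∀ᵐ x, x ∈ Set.uIoc a b → r x = |g x| := by
    have hb : ∀ᵐ x : ℝ, x ≠ b := by simp [ae_iff]
    filter_upwards [hg, hb] with x hx hxb hxm
    rw [uIoc_of_le hab] at hxm
    have hxI : x ∈ Ioo a b := ⟨hxm.1, lt_of_le_of_ne hxm.2 hxb⟩
    have h1 : r x = g x :=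
      (uniqueDiffWithinAt_Ioi x).eq_deriv _ (hr x hxI) (hx hxI).hasDerivWithinAt
    rw [← h1, abs_of_nonneg (hr0 x hxI)]
  refine ⟨hint.congr_ae ?_, ?_⟩
  · rwa [Filter.EventuallyEq, ae_restrict_iff' measurableSet_uIoc]
  · rw [← hI]
    exact (intervalIntegral.integral_congr_ae hae).symm

/-- The total variation of a concave function on an interval vanishing at the endpoints is twice
its maximum. -/
lemma ConcaveOn.exists_integral_abs_deriv_eq {a b : ℝ} (hab : a < b) {f g : ℝ → ℝ}
    (hf : ConcaveOn ℝ (Icc a b) f) (hc : ContinuousOn f (Icc a b)) (ha : f a = 0) (hb : f b = 0)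
    (hg : ∀ᵐ x, x ∈ Ioo a b → HasDerivAt f (g x) x) :
    ∃ m ∈ Icc a b, (∀ x ∈ Icc a b, f x ≤ f m) ∧ ∫ x in Ioo a b, |g x| = 2 * f m := by
  obtain ⟨m, hm, hmax⟩ := isCompact_Icc.exists_isMaxOn (nonempty_Icc.2 hab.le) hc
  refine ⟨m, hm, hmax, ?_⟩
  have hr : ∀ x ∈ Ioo a b, HasDerivWithinAt f (-derivWithin (-f) (Ioi x) x) (Ioi x) x := by
    intro x hx
    have := (hf.neg.hasDerivWithinAt_rightDeriv_of_mem_interior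
      (x := x) (by rwa [interior_Icc])).neg
    simpa using this
  have hmono : MonotoneOn f (Icc a m) := by
    intro x hx y hy hxy
    have := hf.min_le_of_mem_Icc (x := x) (y := m) (z := y) ⟨hx.1, hx.2.trans hm.2⟩ hm ⟨hxy, hy.2⟩
    rwa [min_eq_left (hmax ⟨hx.1, hx.2.trans hm.2⟩)] at this
  have hanti : AntitoneOn f (Icc m b) := by
    intro x hx y hy hxy
    have := hf.min_le_of_mem_Icc (x := m) (y := y) (z := x) hm ⟨hm.1.trans hy.1, hy.2⟩ ⟨hx.1, hxy⟩
    rwa [min_eq_right (hmax ⟨hm.1.trans hy.1, hy.2⟩)] at this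
  obtain ⟨i1, e1⟩ := hmono.integral_abs_deriv_of_hasDerivWithinAt_Ioi hm.1 (g := g)
    (hc.mono (Icc_subset_Icc_right hm.2)) (fun x hx => hr x ⟨hx.1, hx.2.trans_le hm.2⟩)
    (hg.mono fun x h hx => h ⟨hx.1, hx.2.trans_le hm.2⟩)
  obtain ⟨i2, e2⟩ := hanti.neg.integral_abs_deriv_of_hasDerivWithinAt_Ioi hm.2 (g := fun x => -g x)
    (hc.neg.mono (Icc_subset_Icc_left hm.1))
    (fun x hx => (hr x ⟨hm.1.trans_lt hx.1, hx.2⟩).neg)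
    (hg.mono fun x h hx => (h ⟨hm.1.trans_lt hx.1, hx.2⟩).neg)
  simp only [abs_neg] at i2 e2
  rw [← integral_Ioc_eq_integral_Ioo, ← intervalIntegral.integral_of_le hab.le,
    ← intervalIntegral.integral_add_adjacent_intervals i1 i2, e1, e2]
  simp only [ha, hb]
  ring

/-- A concave function on a convex set is differentiable almost everywhere in its interior. -/
lemma ConcaveOn.ae_differentiableAt_of_mem_interior {E : Type*} [NormedAddCommGroup E]
    [NormedSpace ℝ E] [FiniteDimensional ℝ E] [MeasurableSpace E] [BorelSpace E]
    {μ : Measure E} [μ.IsAddHaarMeasure] {s : Set E} {u : E → ℝ} (hu : ConcaveOn ℝ s u) :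
    ∀ᵐ z ∂μ, z ∈ interior s → DifferentiableAt ℝ u z := by
  rw [ae_iff]
  refine measure_null_of_locally_null _ fun z hz => ?_
  simp only [Classical.not_imp, mem_ofPred_eq] at hz
  obtain ⟨K, t, ht, hK⟩ := hu.locallyLipschitzOn_interior hz.1
  rw [isOpen_interior.nhdsWithin_eq hz.1] at ht
  obtain ⟨o, hot, ho, hzo⟩ := mem_nhds_iff.1 ht
  refine ⟨_, Filter.inter_mem self_mem_nhdsWithin
    (mem_nhdsWithin_of_mem_nhds (ho.mem_nhds hzo)), ?_⟩
  have := (hK.mono hot).ae_differentiableWithinAt_of_mem (μ := μ)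
  rw [ae_iff] at this
  refine measure_mono_null (fun w hw => ?_) this
  simp only [Classical.not_imp, mem_ofPred_eq, mem_inter_iff] at hw ⊢
  exact ⟨hw.2, fun h => hw.1.2 (h.differentiableAt (ho.mem_nhds hw.2))⟩

/-- The section of an open bounded convex planar set at a given height is an open interval. -/
lemma exists_section_eq_Ioo {U : Set (ℝ × ℝ)} (hU : IsOpen U) (hb : Bornology.IsBounded U)
    (hc : Convex ℝ U) {y : ℝ} (hne : ∃ x, (x, y) ∈ U) :
    ∃ a b, a < b ∧ ∀ x, (x, y) ∈ U ↔ x ∈ Ioo a b := by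
  set S : Set ℝ := (fun x => (x, y)) ⁻¹' U with hS
  have hSo : IsOpen S := hU.preimage (by fun_prop)
  have hSc : Convex ℝ S := by
    intro x hx x' hx' s t hs ht hst
    have := hc hx hx' hs ht hst
    have e : s • (x, y) + t • (x', y) = (s • x + t • x', y) := by
      ext <;> simp [← add_mul, hst]
    rwa [e] at this
  have hSne : S.Nonempty := hne
  have hSb : Bornology.IsBounded S :=
    hb.image_fst.subset fun x hx => ⟨(x, y), hx, rfl⟩
  have h1 := (hSc.isConnected hSne).Ioo_csInf_csSup_subset hSb.bddBelow hSb.bddAbove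
  have h2 : S ⊆ Ioo (sInf S) (sSup S) := by
    rw [← interior_Icc]
    exact hSo.subset_interior_iff.2 (subset_Icc_csInf_csSup hSb.bddBelow hSb.bddAbove)
  obtain ⟨x, hx⟩ := hSne
  exact ⟨sInf S, sSup S, (h2 hx).1.trans (h2 hx).2, fun x => ⟨fun h => h2 h, fun h => h1 h⟩⟩

/-- Interior points of a set stay strictly above any lower bound of the heights. -/
lemma lt_snd_of_mem_interior {Ω : Set (ℝ × ℝ)} {c : ℝ} (hc : ∀ z ∈ Ω, c ≤ z.2) {z : ℝ × ℝ}
    (hz : z ∈ interior Ω) : c < z.2 := by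
  have : z ∈ interior (Prod.snd ⁻¹' Ici c : Set (ℝ × ℝ)) := interior_mono hc hz
  rw [← isOpenMap_snd.preimage_interior_eq_interior_preimage continuous_snd, interior_Ici] at this
  exact this

/-- Interior points of a set stay strictly below any upper bound of the heights. -/
lemma snd_lt_of_mem_interior {Ω : Set (ℝ × ℝ)} {d : ℝ} (hd : ∀ z ∈ Ω, z.2 ≤ d) {z : ℝ × ℝ}
    (hz : z ∈ interior Ω) : z.2 < d := by
  have : z ∈ interior (Prod.snd ⁻¹' Iic d : Set (ℝ × ℝ)) := interior_mono hd hz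
  rw [← isOpenMap_snd.preimage_interior_eq_interior_preimage continuous_snd, interior_Iic] at this
  exact this

/-- A convex body has interior points at every height strictly between those of two of its
points. -/
lemma exists_mem_interior_of_snd_lt {Ω : Set (ℝ × ℝ)} (hΩconv : Convex ℝ Ω)
    (hΩint : (interior Ω).Nonempty) {p q : ℝ × ℝ} (hp : p ∈ Ω) (hq : q ∈ Ω) {y : ℝ}
    (hpy : p.2 < y) (hyq : y < q.2) : ∃ x, (x, y) ∈ interior Ω := by
  have hcl : ∀ z ∈ Ω, z ∈ closure (interior Ω) := fun z hz => by
    rw [hΩconv.closure_interior_eq_closure_of_nonempty_interior hΩint]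
    exact subset_closure hz
  obtain ⟨p', hp'y, hp'⟩ := mem_closure_iff.1 (hcl p hp) _
    (isOpen_Iio.preimage continuous_snd : IsOpen (Prod.snd ⁻¹' Iio y : Set (ℝ × ℝ))) hpy
  obtain ⟨q', hq'y, hq'⟩ := mem_closure_iff.1 (hcl q hq) _
    (isOpen_Ioi.preimage continuous_snd : IsOpen (Prod.snd ⁻¹' Ioi y : Set (ℝ × ℝ))) hyq
  have := (hΩconv.interior.isPreconnected.image Prod.snd continuous_snd.continuousOn).Icc_subset
    (mem_image_of_mem _ hp') (mem_image_of_mem _ hq')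
  obtain ⟨z, hz, rfl⟩ := this ⟨le_of_lt hp'y, le_of_lt hq'y⟩
  exact ⟨z.1, hz⟩

/-- On almost every horizontal line, the integral of `|u_x|` is twice the maximum of `u`. -/
lemma exists_section_integral_abs_ux_eq {Ω : Set (ℝ × ℝ)} (hΩc : IsCompact Ω)
    (hΩconv : Convex ℝ Ω) {u : ℝ × ℝ → ℝ} (hu : MemU Ω u) {y : ℝ}
    (hne : ∃ x, (x, y) ∈ interior Ω)
    (hd : ∀ᵐ x, (x, y) ∈ interior Ω → DifferentiableAt ℝ u (x, y)) :
    ∃ m, (m, y) ∈ Ω ∧ (∀ x, (x, y) ∈ Ω → u (x, y) ≤ u (m, y)) ∧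
      ∫ x, (interior Ω).indicator (fun z => |ux u z|) (x, y) = 2 * u (m, y) := by
  obtain ⟨hcont, hconc, hfr, -⟩ := hu
  obtain ⟨a, b, hab, hS⟩ := exists_section_eq_Ioo isOpen_interior
    (hΩc.isBounded.subset interior_subset) hΩconv.interior hne
  have hcl : ∀ x ∈ Icc a b, (x, y) ∈ Ω := by
    intro x hx
    rw [← closure_Ioo hab.ne] at hx
    rw [← hΩc.isClosed.closure_eq]
    exact map_mem_closure (f := fun x => (x, y)) (by fun_prop) hx
      fun x hx => interior_subset ((hS x).2 hx)
  have hzero : ∀ x, (x, y) ∈ Ω → x ∉ Ioo a b → u (x, y) = 0 := fun x hx hx' =>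
    hfr _ (by rw [hΩc.isClosed.frontier_eq]; exact ⟨hx, fun h => hx' ((hS x).1 h)⟩)
  have ha : a ∈ Icc a b := left_mem_Icc.2 hab.le
  have hb : b ∈ Icc a b := right_mem_Icc.2 hab.le
  have hua : u (a, y) = 0 := hzero a (hcl a ha) (by simp)
  have hub : u (b, y) = 0 := hzero b (hcl b hb) (by simp)
  obtain ⟨m, hm, hmax, hI⟩ := ConcaveOn.exists_integral_abs_deriv_eq hab
    (f := fun x => u (x, y)) (g := fun x => ux u (x, y))
    (by
      refine ⟨convex_Icc a b, fun x hx x' hx' s t hs ht hst => ?_⟩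
      have := hconc.2 (hcl x hx) (hcl x' hx') hs ht hst
      have e : s • (x, y) + t • (x', y) = (s • x + t • x', y) := by
        ext <;> simp [← add_mul, hst]
      rwa [e] at this)
    (hcont.comp (by fun_prop) hcl) hua hub
    (by
      filter_upwards [hd] with x hx hxI
      have h1 := (hx ((hS x).2 hxI)).hasFDerivAt
      exact h1.comp_hasDerivAt x ((hasDerivAt_id x).prodMk (hasDerivAt_const x y)))
  refine ⟨m, hcl m hm, fun x hx => ?_, ?_⟩
  · by_cases hxI : x ∈ Ioo a b
    · exact hmax x (Ioo_subset_Icc_self hxI)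
    · rw [hzero x hx hxI, ← hua]
      exact hmax a ha
  · rw [← hI, ← integral_indicator measurableSet_Ioo]
    congr 1 with x
    by_cases hx : x ∈ Ioo a b
    · rw [indicator_of_mem hx, indicator_of_mem ((hS x).2 hx)]
    · rw [indicator_of_notMem hx, indicator_of_notMem (fun h => hx ((hS x).1 h))]

/-- The integral of an affine function vanishing at the left endpoint. -/
lemma integral_mul_sub_div_left (k a b : ℝ) :
    ∫ y in a..b, 2 * (k * ((y - a) / (b - a))) = k * (b - a) := by
  rcases eq_or_ne a b with rfl | h
  · simp
  have h' : b - a ≠ 0 := sub_ne_zero.2 h.symm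
  have e : ∀ y, 2 * (k * ((y - a) / (b - a))) = 2 * k / (b - a) * (y - a) := fun y => by
    field_simp
  simp only [e]
  rw [intervalIntegral.integral_const_mul, intervalIntegral.integral_comp_sub_right (fun y => y),
    integral_id]
  field_simp
  ring

/-- The integral of an affine function vanishing at the right endpoint. -/
lemma integral_mul_sub_div_right (k a b : ℝ) :
    ∫ y in a..b, 2 * (k * ((b - y) / (b - a))) = k * (b - a) := by
  rw [intervalIntegral.integral_comp_sub_left (fun t => 2 * (k * (t / (b - a)))) b]
  simpa using integral_mul_sub_div_left k 0 (b - a)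

/-- The partial derivative of a member of `𝒰_Ω` is integrable over the interior. -/
lemma MemU.integrable_indicator_ux {Ω : Set (ℝ × ℝ)} (hΩc : IsCompact Ω) {u : ℝ × ℝ → ℝ}
    (hu : MemU Ω u) : Integrable ((interior Ω).indicator fun z => |ux u z|) := by
  obtain ⟨C, hC⟩ := hu.2.2.2
  rw [integrable_indicator_iff isOpen_interior.measurableSet]
  have hm : Measurable fun z => |ux u z| := (measurable_fderiv_apply_const ℝ u (1, 0)).abs
  refine Measure.integrableOn_of_bounded (M := |C|)
    ((measure_mono interior_subset).trans_lt hΩc.measure_lt_top).ne hm.aestronglyMeasurable ?_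
  filter_upwards [ae_restrict_mem isOpen_interior.measurableSet] with z hz
  rw [Real.norm_eq_abs, abs_abs]
  by_cases hd : DifferentiableAt ℝ u z
  · have h1 := (fderiv ℝ u z).le_opNorm (1, 0)
    have h2 : ‖((1 : ℝ), (0 : ℝ))‖ = 1 := by simp [Prod.norm_def]
    rw [h2, mul_one, Real.norm_eq_abs] at h1
    exact (h1.trans (hC z hz _ hd.hasFDerivAt)).trans (le_abs_self C)
  · simp [ux, fderiv_zero_of_not_differentiableAt hd]

/-- Convexity of `Ω` and concavity of `u` bound the values of `u` below by those on a chord. -/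
lemma MemU.exists_mul_le {Ω : Set (ℝ × ℝ)} {u : ℝ × ℝ → ℝ} (hu : MemU Ω u) {p z : ℝ × ℝ}
    (hp : p ∈ Ω) (hz : z ∈ Ω) (hup : u p = 0) {t y : ℝ} (ht0 : 0 ≤ t) (ht1 : t ≤ 1)
    (hy : y = (1 - t) * p.2 + t * z.2) : ∃ x, (x, y) ∈ Ω ∧ u z * t ≤ u (x, y) := by
  have e : (1 - t) • p + t • z = ((1 - t) * p.1 + t * z.1, y) := by
    ext <;> simp [hy]
  have h1 := hu.2.1.1 hp hz (sub_nonneg.2 ht1) ht0 (by ring)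
  have h2 := hu.2.1.2 hp hz (sub_nonneg.2 ht1) ht0 (by ring)
  rw [e] at h1 h2
  refine ⟨_, h1, ?_⟩
  rw [hup, smul_zero, zero_add, smul_eq_mul] at h2
  linarith

/-- The `L¹` norm of `u_x` is comparable to the maximum of `u` times the height of `Ω`. -/
lemma MemU.L1N_ux_bounds {Ω : Set (ℝ × ℝ)} (hΩc : IsCompact Ω) (hΩconv : Convex ℝ Ω)
    (hΩint : (interior Ω).Nonempty) {u : ℝ × ℝ → ℝ} (hu : MemU Ω u) {z₀ p q : ℝ × ℝ}
    (hz₀ : z₀ ∈ Ω) (hmax : ∀ z ∈ Ω, u z ≤ u z₀) (hp : p ∈ Ω) (hpmin : ∀ z ∈ Ω, p.2 ≤ z.2)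
    (hq : q ∈ Ω) (hqmax : ∀ z ∈ Ω, z.2 ≤ q.2) :
    u z₀ * (q.2 - p.2) ≤ L1N Ω (ux u) ∧ L1N Ω (ux u) ≤ 2 * (u z₀ * (q.2 - p.2)) := by
  set F := (interior Ω).indicator fun z => |ux u z| with hF
  have hFint : Integrable F := hu.integrable_indicator_ux hΩc
  set N : ℝ → ℝ := fun y => ∫ x, F (x, y) with hN
  have hNint : Integrable N := hFint.integral_prod_right
  have hpq : p.2 ≤ q.2 := hpmin q hq
  have hL : L1N Ω (ux u) = ∫ y in p.2..q.2, N y := by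
    have h0 : ∀ y, y ∉ Ioc p.2 q.2 → N y = 0 := by
      intro y hy
      have : ∀ x, F (x, y) = 0 := fun x => indicator_of_notMem (fun h => hy
        ⟨lt_snd_of_mem_interior hpmin h, (snd_lt_of_mem_interior hqmax h).le⟩) _
      simp [hN, this]
    rw [intervalIntegral.integral_of_le hpq, setIntegral_eq_integral_of_forall_compl_eq_zero h0,
      ← integral_prod_symm F hFint, ← Measure.volume_eq_prod, hF,
      integral_indicator isOpen_interior.measurableSet, L1N]
    refine setIntegral_congr_set ?_
    exact (interior_ae_eq_of_null_frontier (hΩconv.addHaar_frontier volume)).symm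
  have hfr : ∀ z ∈ Ω, z ∉ interior Ω → u z = 0 := fun z hz hz' =>
    hu.2.2.1 z (by rw [hΩc.isClosed.frontier_eq]; exact ⟨hz, hz'⟩)
  have hup : u p = 0 := hfr p hp fun h => (lt_snd_of_mem_interior hpmin h).false
  have huq : u q = 0 := hfr q hq fun h => (snd_lt_of_mem_interior hqmax h).false
  have hdiff : ∀ᵐ y, ∀ᵐ x, (x, y) ∈ interior Ω → DifferentiableAt ℝ u (x, y) := by
    have h := hu.2.1.ae_differentiableAt_of_mem_interior (μ := volume)
    rw [Measure.volume_eq_prod, ← Measure.prod_swap] at h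
    exact Measure.ae_ae_of_ae_prod (ae_of_ae_map measurable_swap.aemeasurable h)
  have hsec : ∀ᵐ y, y ∈ Ioo p.2 q.2 → ∃ m, (m, y) ∈ Ω ∧
      (∀ x, (x, y) ∈ Ω → u (x, y) ≤ u (m, y)) ∧ N y = 2 * u (m, y) := by
    filter_upwards [hdiff] with y hy hyI
    exact exists_section_integral_abs_ux_eq hΩc hΩconv hu
      (exists_mem_interior_of_snd_lt hΩconv hΩint hp hq hyI.1 hyI.2) hy
  have hp0 : p.2 ≤ z₀.2 := hpmin z₀ hz₀
  have h0q : z₀.2 ≤ q.2 := hqmax z₀ hz₀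
  have hIoo : ∀ a b : ℝ, p.2 ≤ a → b ≤ q.2 → ∀ᵐ y ∂volume.restrict (Icc a b),
      y ∈ Ioo p.2 q.2 ∧ y ∈ Icc a b := by
    intro a b ha hb
    rw [ae_restrict_iff' measurableSet_Icc]
    have h1 : ∀ᵐ x : ℝ, x ≠ p.2 := by simp [ae_iff]
    have h2 : ∀ᵐ x : ℝ, x ≠ q.2 := by simp [ae_iff]
    filter_upwards [h1, h2] with y hy1 hy2 hy
    exact ⟨⟨lt_of_le_of_ne (ha.trans hy.1) hy1.symm, lt_of_le_of_ne (hy.2.trans hb) hy2⟩, hy⟩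
  rw [hL]
  constructor
  · rw [← intervalIntegral.integral_add_adjacent_intervals
      (hNint.intervalIntegrable (a := p.2) (b := z₀.2)) hNint.intervalIntegrable]
    have h1 : u z₀ * (z₀.2 - p.2) ≤ ∫ y in p.2..z₀.2, N y := by
      rw [← integral_mul_sub_div_left]
      refine intervalIntegral.integral_mono_ae_restrict hp0
        (Continuous.intervalIntegrable (by fun_prop) _ _) hNint.intervalIntegrable ?_
      filter_upwards [hIoo p.2 z₀.2 le_rfl h0q, ae_restrict_of_ae hsec] with y ⟨hy, hy'⟩ hys
      obtain ⟨m, -, hm, hNy⟩ := hys hy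
      have hpos : 0 < z₀.2 - p.2 := by linarith [hy.1, hy'.2]
      obtain ⟨x, hx, hxu⟩ := hu.exists_mul_le hp hz₀ hup (t := (y - p.2) / (z₀.2 - p.2)) (y := y)
        (div_nonneg (by linarith [hy.1]) hpos.le) ((div_le_one hpos).2 (by linarith [hy'.2]))
        (by field_simp; ring)
      rw [hNy]
      linarith [hm x hx]
    have h2 : u z₀ * (q.2 - z₀.2) ≤ ∫ y in z₀.2..q.2, N y := by
      rw [← integral_mul_sub_div_right]
      refine intervalIntegral.integral_mono_ae_restrict h0q
        (Continuous.intervalIntegrable (by fun_prop) _ _) hNint.intervalIntegrable ?_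
      filter_upwards [hIoo z₀.2 q.2 hp0 le_rfl, ae_restrict_of_ae hsec] with y ⟨hy, hy'⟩ hys
      obtain ⟨m, -, hm, hNy⟩ := hys hy
      have hpos : 0 < q.2 - z₀.2 := by linarith [hy.2, hy'.1]
      obtain ⟨x, hx, hxu⟩ := hu.exists_mul_le hq hz₀ huq (t := (q.2 - y) / (q.2 - z₀.2)) (y := y)
        (div_nonneg (by linarith [hy.2]) hpos.le) ((div_le_one hpos).2 (by linarith [hy'.1]))
        (by field_simp; ring)
      rw [hNy]
      linarith [hm x hx]
    linarith
  · have e : 2 * (u z₀ * (q.2 - p.2)) = ∫ _ in p.2..q.2, 2 * u z₀ := by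
      rw [intervalIntegral.integral_const, smul_eq_mul]; ring
    rw [e]
    refine intervalIntegral.integral_mono_ae_restrict hpq hNint.intervalIntegrable
      (by simp) ?_
    filter_upwards [hIoo p.2 q.2 le_rfl le_rfl, ae_restrict_of_ae hsec] with y ⟨hy, _⟩ hys
    obtain ⟨m, hmΩ, -, hNy⟩ := hys hy
    rw [hNy]
    linarith [hmax _ hmΩ]

/-- Exchanging the coordinates maps `𝒰_Ω` to the class of the reflected set. -/
lemma MemU.comp_swap {Ω : Set (ℝ × ℝ)} {u : ℝ × ℝ → ℝ} (hu : MemU Ω u) :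
    MemU (Prod.swap ⁻¹' Ω) (u ∘ Prod.swap) := by
  obtain ⟨hcont, hconc, hfr, C, hC⟩ := hu
  let e : (ℝ × ℝ) ≃L[ℝ] (ℝ × ℝ) := ContinuousLinearEquiv.prodComm ℝ ℝ ℝ
  have hnorm : ∀ z : ℝ × ℝ, ‖z.swap‖ = ‖z‖ := fun z => by
    simp [Prod.norm_def, max_comm]
  refine ⟨hcont.comp continuous_swap.continuousOn fun z hz => hz,
    hconc.comp_linearMap (e : (ℝ × ℝ) →ₗ[ℝ] (ℝ × ℝ)), fun z hz => ?_, C, fun z hz g hg => ?_⟩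
  · refine hfr _ ?_
    have := (Homeomorph.prodComm ℝ ℝ).preimage_frontier Ω
    exact this.symm.subset hz
  · have hz' : z.swap ∈ interior Ω :=
      ((Homeomorph.prodComm ℝ ℝ).preimage_interior Ω).symm.subset hz
    have hg' : HasFDerivAt u (g.comp (e : (ℝ × ℝ) →L[ℝ] (ℝ × ℝ))) z.swap :=
      HasFDerivAt.comp (g := u ∘ Prod.swap) (f := e) z.swap hg e.hasFDerivAt
    have hle := hC _ hz' _ hg'
    refine g.opNorm_le_bound ((norm_nonneg _).trans hle) fun w => ?_
    have h1 := (g.comp (e : (ℝ × ℝ) →L[ℝ] (ℝ × ℝ))).le_of_opNorm_le hle w.swap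
    rwa [hnorm] at h1

/-- Exchanging the coordinates turns `u_y` into `u_x`. -/
lemma L1N_ux_comp_swap (Ω : Set (ℝ × ℝ)) (u : ℝ × ℝ → ℝ) :
    L1N (Prod.swap ⁻¹' Ω) (ux (u ∘ Prod.swap)) = L1N Ω (uy u) := by
  have h : ∀ z, ux (u ∘ Prod.swap) z = uy u z.swap := fun z => by
    have := (ContinuousLinearEquiv.prodComm ℝ ℝ ℝ).comp_right_fderiv (f := u) (x := z)
    exact congrArg (fun L : (ℝ × ℝ) →L[ℝ] ℝ => L (1, 0)) this
  simp only [L1N, h]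
  exact (Measure.measurePreserving_swap (μ := (volume : Measure ℝ))
    (ν := (volume : Measure ℝ))).setIntegral_preimage_emb
    (MeasurableEquiv.prodComm (α := ℝ) (β := ℝ)).measurableEmbedding (fun z => |uy u z|) Ω

/-- A concave function on a compact set vanishing on the boundary is nonnegative. -/
lemma MemU.nonneg {Ω : Set (ℝ × ℝ)} (hΩc : IsCompact Ω) {u : ℝ × ℝ → ℝ} (hu : MemU Ω u)
    {p : ℝ × ℝ} (hp : p ∈ Ω) (hup : u p = 0) {z : ℝ × ℝ} (hz : z ∈ Ω) : 0 ≤ u z := by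
  obtain ⟨w, hw, hmin⟩ := hΩc.exists_isMinOn ⟨z, hz⟩ hu.1
  refine le_trans ?_ (hmin hz)
  by_cases hwi : w ∈ interior Ω
  · have hlim : Filter.Tendsto (fun ε : ℝ => w + ε • (w - p)) (nhdsWithin 0 (Ioi 0)) (nhds w) := by
      have : Continuous fun ε : ℝ => w + ε • (w - p) := by fun_prop
      simpa using (this.tendsto 0).mono_left nhdsWithin_le_nhds
    obtain ⟨ε, hεΩ, hε⟩ := ((hlim.eventually (mem_interior_iff_mem_nhds.1 hwi)).and
      self_mem_nhdsWithin).exists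
    have hε : 0 < ε := hε
    have h1 : 0 < 1 + ε := by linarith
    have h := hu.2.1.2 hεΩ hp (by positivity : 0 ≤ 1 / (1 + ε))
      (by positivity : 0 ≤ ε / (1 + ε)) (by field_simp)
    have e : (1 / (1 + ε)) • (w + ε • (w - p)) + (ε / (1 + ε)) • p = w := by
      ext <;> simp <;> field_simp <;> ring
    rw [e, hup, smul_zero, add_zero, smul_eq_mul, div_mul_eq_mul_div, one_mul, div_le_iff₀ h1] at h
    have h2 : u w ≤ u (w + ε • (w - p)) := hmin hεΩ
    nlinarith
  · refine (hu.2.2.1 w ?_).ge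
    exact ⟨subset_closure hw, hwi⟩

/-- The `L¹` norms of both partial derivatives are comparable to the maximum of `u`, with
constants depending only on `Ω`. -/
lemma exists_L1N_bounds {Ω : Set (ℝ × ℝ)} (hΩc : IsCompact Ω) (hΩconv : Convex ℝ Ω)
    (hΩint : (interior Ω).Nonempty) :
    ∃ A B : ℝ, 0 < A ∧ 0 < B ∧ ∀ u, MemU Ω u → ∃ K : ℝ, 0 ≤ K ∧ ((∃ z ∈ Ω, u z ≠ 0) → 0 < K) ∧
      K * A ≤ L1N Ω (ux u) ∧ L1N Ω (ux u) ≤ 2 * (K * A) ∧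
      K * B ≤ L1N Ω (uy u) ∧ L1N Ω (uy u) ≤ 2 * (K * B) := by
  obtain ⟨o, ho⟩ := hΩint
  have hne : Ω.Nonempty := ⟨o, interior_subset ho⟩
  obtain ⟨p, hp, hpmin⟩ := hΩc.exists_isMinOn hne continuous_snd.continuousOn
  obtain ⟨q, hq, hqmax⟩ := hΩc.exists_isMaxOn hne continuous_snd.continuousOn
  obtain ⟨p', hp', hpmin'⟩ := hΩc.exists_isMinOn hne continuous_fst.continuousOn
  obtain ⟨q', hq', hqmax'⟩ := hΩc.exists_isMaxOn hne continuous_fst.continuousOn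
  have hsc : IsCompact (Prod.swap ⁻¹' Ω : Set (ℝ × ℝ)) :=
    (Homeomorph.prodComm ℝ ℝ).isCompact_preimage.2 hΩc
  have hsconv : Convex ℝ (Prod.swap ⁻¹' Ω : Set (ℝ × ℝ)) :=
    hΩconv.linear_preimage (LinearEquiv.prodComm ℝ ℝ ℝ : (ℝ × ℝ) →ₗ[ℝ] (ℝ × ℝ))
  have hsint : o.swap ∈ interior (Prod.swap ⁻¹' Ω : Set (ℝ × ℝ)) :=
    ((Homeomorph.prodComm ℝ ℝ).preimage_interior Ω).subset ho
  have hpo : p.2 < o.2 := lt_snd_of_mem_interior (fun z hz => hpmin hz) ho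
  have hoq : o.2 < q.2 := snd_lt_of_mem_interior (fun z hz => hqmax hz) ho
  have hpo' : p'.1 < o.1 :=
    lt_snd_of_mem_interior (Ω := Prod.swap ⁻¹' Ω) (z := o.swap) (fun z hz => hpmin' hz) hsint
  have hoq' : o.1 < q'.1 :=
    snd_lt_of_mem_interior (Ω := Prod.swap ⁻¹' Ω) (z := o.swap) (fun z hz => hqmax' hz) hsint
  refine ⟨q.2 - p.2, q'.1 - p'.1, by linarith, by linarith, fun u hu => ?_⟩
  obtain ⟨z₀, hz₀, hmax⟩ := hΩc.exists_isMaxOn hne hu.1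
  have hup : u p = 0 := hu.2.2.1 p ⟨subset_closure hp, fun h =>
    (lt_snd_of_mem_interior (fun z hz => hpmin hz) h).false⟩
  obtain ⟨h1, h2⟩ := hu.L1N_ux_bounds hΩc hΩconv ⟨o, ho⟩ hz₀ (fun z hz => hmax hz) hp
    (fun z hz => hpmin hz) hq (fun z hz => hqmax hz)
  obtain ⟨h3, h4⟩ := hu.comp_swap.L1N_ux_bounds (z₀ := z₀.swap) (p := p'.swap) (q := q'.swap)
    hsc hsconv ⟨_, hsint⟩ hz₀ (fun z hz => hmax hz) hp' (fun z hz => hpmin' hz) hq'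
    (fun z hz => hqmax' hz)
  rw [L1N_ux_comp_swap] at h3 h4
  refine ⟨u z₀, hu.nonneg hΩc hp hup hz₀, ?_, h1, h2, h3, h4⟩
  rintro ⟨z, hz, hz0⟩
  exact (lt_of_le_of_ne (hu.nonneg hΩc hp hup hz) hz0.symm).trans_le (hmax hz)

/-- for all `u, v ∈ 𝒰_Ω`, `‖u_x‖₁ ‖v_y‖₁ ≤ 4 ‖u_y‖₁ ‖v_x‖₁`; in particular
the ratio of the supremum to the infimum of `‖u_x‖₁/‖u_y‖₁` over nonzero `u` is at
most `4`. -/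
theorem stmt_6 (Ω : Set (ℝ × ℝ)) (hΩc : IsCompact Ω) (hΩconv : Convex ℝ Ω)
    (hΩint : (interior Ω).Nonempty) :
    (∀ u v : ℝ × ℝ → ℝ, MemU Ω u → MemU Ω v →
      L1N Ω (ux u) * L1N Ω (uy v) ≤ 4 * (L1N Ω (uy u) * L1N Ω (ux v))) ∧
    sSup {r : ℝ | ∃ u : ℝ × ℝ → ℝ, MemU Ω u ∧ (∃ z ∈ Ω, u z ≠ 0) ∧
        r = L1N Ω (ux u) / L1N Ω (uy u)} ≤
      4 * sInf {r : ℝ | ∃ u : ℝ × ℝ → ℝ, MemU Ω u ∧ (∃ z ∈ Ω, u z ≠ 0) ∧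
        r = L1N Ω (ux u) / L1N Ω (uy u)} := by
  obtain ⟨A, B, hA, hB, h⟩ := exists_L1N_bounds hΩc hΩconv hΩint
  have hmain : ∀ u v : ℝ × ℝ → ℝ, MemU Ω u → MemU Ω v →
      L1N Ω (ux u) * L1N Ω (uy v) ≤ 4 * (L1N Ω (uy u) * L1N Ω (ux v)) := by
    intro u v hu hv
    obtain ⟨K, hK, -, u1, u2, u3, -⟩ := h u hu
    obtain ⟨M, hM, -, v1, -, v3, v4⟩ := h v hv
    have hKB : 0 ≤ K * B := by positivity
    have hMA : 0 ≤ M * A := by positivity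
    have hMB : 0 ≤ M * B := by positivity
    calc L1N Ω (ux u) * L1N Ω (uy v) ≤ (2 * (K * A)) * (2 * (M * B)) :=
          mul_le_mul u2 v4 (hMB.trans v3) (by positivity)
      _ = 4 * ((K * B) * (M * A)) := by ring
      _ ≤ 4 * (L1N Ω (uy u) * L1N Ω (ux v)) := by
          gcongr
          exact hKB.trans u3
  refine ⟨hmain, ?_⟩
  set S := {r : ℝ | ∃ u : ℝ × ℝ → ℝ, MemU Ω u ∧ (∃ z ∈ Ω, u z ≠ 0) ∧
    r = L1N Ω (ux u) / L1N Ω (uy u)}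
  rcases S.eq_empty_or_nonempty with hS | hS
  · simp [hS]
  have hpos : ∀ u, MemU Ω u → (∃ z ∈ Ω, u z ≠ 0) → 0 < L1N Ω (uy u) := by
    intro u hu hne
    obtain ⟨K, -, hK, -, -, u3, -⟩ := h u hu
    exact (mul_pos (hK hne) hB).trans_le u3
  refine csSup_le hS ?_
  rintro _ ⟨u, hu, hune, rfl⟩
  rw [← div_le_iff₀' (by norm_num : (0 : ℝ) < 4)]
  refine le_csInf hS ?_
  rintro _ ⟨v, hv, hvne, rfl⟩
  rw [div_le_iff₀' (by norm_num : (0 : ℝ) < 4), ← mul_div_assoc,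
    div_le_div_iff₀ (hpos u hu hune) (hpos v hv hvne)]
  linarith [hmain u v hu hv]
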